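/- If x is a point of a quadric Q in ℝ^d such that there exist d linearly independent directions u₁,…,u_d with the entire line {x + t·u_k : t ∈ ℝ} contained in Q for each k, then x is a cone point of Q: for every other point y ∈ Q, the whole line through x and y lies in Q. -/

import Mathlib

open Matrix

/-- If a point `x` of a quadric in ℝ^d has `d` linearly independent ruling directions
(lines through `x` contained in the quadric), then `x` is a cone point of the quadric:
for every other point `y` of the quadric, the whole line through `x` and `y` lies in
the quadric. -/
theorem cone_point_of_d_rulings {d : ℕ} (Q : Matrix (Fin d) (Fin d) ℝ)
    (hQsymm : Q.IsSymm) (l : Fin d → ℝ) (c : ℝ)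
    (hnontriv : ¬ (Q = 0 ∧ l = 0 ∧ c = 0))
    (x : Fin d → ℝ)
    (hx : x ⬝ᵥ Q.mulVec x + l ⬝ᵥ x + c = 0)
    (u : Fin d → Fin d → ℝ) (hu : LinearIndependent ℝ u)
    (hruled : ∀ (k : Fin d) (t : ℝ),
      (x + t • u k) ⬝ᵥ Q.mulVec (x + t • u k) + l ⬝ᵥ (x + t • u k) + c = 0) :
    ∀ y : Fin d → ℝ, y ⬝ᵥ Q.mulVec y + l ⬝ᵥ y + c = 0 →
      ∀ t : ℝ, (x + t • (y - x)) ⬝ᵥ Q.mulVec (x + t • (y - x)) +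
        l ⬝ᵥ (x + t • (y - x)) + c = 0 := by
  have key : ∀ (v : Fin d → ℝ) (t : ℝ),
      (x + t • v) ⬝ᵥ Q.mulVec (x + t • v) + l ⬝ᵥ (x + t • v) + c
        = (x ⬝ᵥ Q.mulVec x + l ⬝ᵥ x + c)
          + t * (x ⬝ᵥ Q.mulVec v + v ⬝ᵥ Q.mulVec x + l ⬝ᵥ v)
          + t ^ 2 * (v ⬝ᵥ Q.mulVec v) := by
    intro v t
    simp only [mulVec_add, mulVec_smul, dotProduct_add, add_dotProduct, dotProduct_smul,
      smul_dotProduct, smul_eq_mul]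
    ring
  let g : (Fin d → ℝ) →ₗ[ℝ] ℝ :=
    { toFun := fun v => x ⬝ᵥ Q.mulVec v + v ⬝ᵥ Q.mulVec x + l ⬝ᵥ v
      map_add' := by
        intro a b
        simp only [mulVec_add, dotProduct_add, add_dotProduct]
        ring
      map_smul' := by
        intro r a
        simp only [mulVec_smul, dotProduct_smul, smul_dotProduct, smul_eq_mul, RingHom.id_apply]
        ring }
  have hgu : ∀ k, g (u k) = 0 := by
    intro k
    change x ⬝ᵥ Q.mulVec (u k) + u k ⬝ᵥ Q.mulVec x + l ⬝ᵥ u k = 0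
    have h1 := hruled k 1
    have h2 := hruled k (-1)
    rw [key, hx] at h1 h2
    linarith
  have hspan : Submodule.span ℝ (Set.range u) = ⊤ :=
    hu.span_eq_top_of_card_eq_finrank' (by simp)
  have hg : g = 0 := by
    apply LinearMap.ext_on_range hspan
    intro k
    simpa using hgu k
  intro y hy t
  have hgy : x ⬝ᵥ Q.mulVec (y - x) + (y - x) ⬝ᵥ Q.mulVec x + l ⬝ᵥ (y - x) = 0 :=
    LinearMap.congr_fun hg (y - x)
  have h1 := key (y - x) 1
  rw [one_smul, add_sub_cancel, hy, hx, hgy] at h1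
  rw [key, hx, hgy]
  have h2 : (y - x) ⬝ᵥ Q.mulVec (y - x) = 0 := by linarith
  rw [h2]
  ring
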